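/- For any integer k there exists a continuous almost embedding g : K4 → ℝ² of the complete graph K4 on vertex set {1,2,3,4} such that w(g|_{K3}, g(4)) = k, where K3 is the 3-cycle on the vertices {1,2,3} oriented by the cyclic permutation (1 2 3). -/

import Mathlib

/-!
With vertices numbered `0, 1, 2, 3` as in `vert4`, send them to `2`, `-2`, `i` and `0` respectively. The
edge `01` runs along the circle `|z| = 2` through the angle `(2k+1)π`; all other edges are straight
segments. Opposite edges are disjoint: the edge `23` lies in the unit disc while `01` has modulus
`2`, and the pairs `12, 03` and `02, 13` are disjoint segments. The path from `-2` through `i` to `2`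
turns by `-π`, so the triangle winds `k` times around `0`.

All disjointness conditions say that two points of the complex with disjoint supports have
different images, which is `windMap_ne`. A logarithm of the loop is explicit on the edge `01`, and
is a branch of `log` cut along the negative imaginary axis on the rest (`isWindingNumber_windMap`).
-/

open Set

noncomputable section

/-- The vertex `i` of `K₄` (0-indexed: index `i` is vertex `i+1`),
realized as a point of `ℝ⁴`. -/
def vert4 (i : Fin 4) : Fin 4 → ℝ := Pi.single i 1

/-- The edge between vertices `i` and `j` of `K₄`, realized as a segment in `ℝ⁴`. -/
def seg4 (i j : Fin 4) : Set (Fin 4 → ℝ) := segment ℝ (vert4 i) (vert4 j)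

/-- The complete graph `K₄`, realized as a 1-dimensional simplicial complex in `ℝ⁴`. -/
def K4compl : Set (Fin 4 → ℝ) := ⋃ (i) (j) (_ : i ≠ j), seg4 i j

/-- The closed curve traversing the cycle `K₃` on vertices `1, 2, 3` of `K₄`,
oriented by the cyclic permutation `(1 2 3)`. -/
def triLoop4 (t : ℝ) : Fin 4 → ℝ :=
  if t ≤ 1/3 then (1 - 3*t) • vert4 0 + (3*t) • vert4 1
  else if t ≤ 2/3 then (2 - 3*t) • vert4 1 + (3*t - 1) • vert4 2
  else (3 - 3*t) • vert4 2 + (3*t - 2) • vert4 0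

/-- `n` is the winding number around `A` of the closed curve `γ` (a loop
parametrized by `[0,1]`): a continuous logarithm of `γ - A` gains `2πin`
along the loop. -/
def IsWindingNumber (γ : ℝ → ℂ) (A : ℂ) (n : ℤ) : Prop :=
  ∃ h : ℝ → ℂ, ContinuousOn h (Icc 0 1) ∧
    (∀ t ∈ Icc (0:ℝ) 1, γ t = A + Complex.exp (h t)) ∧
    h 1 - h 0 = 2 * (Real.pi : ℂ) * Complex.I * (n : ℂ)

/-- `g` is a continuous almost embedding of `K₄` in the plane: it is continuous,
and the images of any two disjoint simplices (vertex–vertex, vertex–edge, or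
edge–edge) are disjoint. -/
def AlmostEmbK4 (g : (Fin 4 → ℝ) → ℂ) : Prop :=
  ContinuousOn g K4compl ∧
  (∀ i j k l : Fin 4, i ≠ j → k ≠ l →
    ({i, j} : Set (Fin 4)) ∩ ({k, l} : Set (Fin 4)) = ∅ →
    Disjoint (g '' seg4 i j) (g '' seg4 k l)) ∧
  (∀ i j k : Fin 4, j ≠ k → i ∉ ({j, k} : Set (Fin 4)) →
    g (vert4 i) ∉ g '' seg4 j k) ∧
  (∀ i j : Fin 4, i ≠ j → g (vert4 i) ≠ g (vert4 j))

/-- A single formula, continuous on all of `ℝ⁴`, for the almost embedding. If `x 0 = 0` or `x 1 = 0`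
it is `2 x₀ - 2 x₁ + i x₂`; on the edge between vertices `0` and `1` it is
`2 exp (i π (2k+1) x₁)`. -/
def windMap (k : ℤ) (x : Fin 4 → ℝ) : ℂ :=
  2 * (x 0 : ℂ) * Complex.exp ((Real.pi * (2 * k + 1) * x 1 : ℝ) * Complex.I)
    - 2 * (x 1 : ℂ) * Complex.exp ((-(Real.pi * (2 * k + 1) * x 0) : ℝ) * Complex.I)
    + (x 2 : ℂ) * Complex.I

lemma continuous_windMap (k : ℤ) : Continuous (windMap k) := by
  unfold windMap
  fun_prop

lemma windMap_of_zero (k : ℤ) {x : Fin 4 → ℝ} (h : x 0 = 0 ∨ x 1 = 0) :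
    windMap k x = ((2 * x 0 - 2 * x 1 : ℝ) : ℂ) + (x 2 : ℝ) * Complex.I := by
  rcases h with h | h <;> simp [windMap, h]

lemma exp_odd_pi (k : ℤ) : Complex.exp ((Real.pi * (2 * k + 1) : ℝ) * Complex.I) = -1 := by
  have : ((Real.pi * (2 * k + 1) : ℝ) : ℂ) * Complex.I
      = Real.pi * Complex.I + k * (2 * Real.pi * Complex.I) := by
    push_cast; ring
  rw [this, Complex.exp_add, Complex.exp_int_mul_two_pi_mul_I, Complex.exp_pi_mul_I, mul_one]

lemma windMap_of_edge (k : ℤ) {x : Fin 4 → ℝ} (h : x 0 + x 1 = 1) (h2 : x 2 = 0) :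
    windMap k x = 2 * Complex.exp ((Real.pi * (2 * k + 1) * x 1 : ℝ) * Complex.I) := by
  -- Since `x 0 = 1 - x 1`, the two exponentials differ by the factor `exp (-(2k+1)πi) = -1`.
  have h0 : x 0 = 1 - x 1 := by linarith
  have e : Complex.exp ((-(Real.pi * (2 * k + 1) * x 0) : ℝ) * Complex.I)
      = - Complex.exp ((Real.pi * (2 * k + 1) * x 1 : ℝ) * Complex.I) := by
    have h1 : ((Real.pi * (2 * k + 1) * x 1 : ℝ) : ℂ) * Complex.I
        = ((-(Real.pi * (2 * k + 1) * x 0) : ℝ) : ℂ) * Complex.I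
          + (Real.pi * (2 * k + 1) : ℝ) * Complex.I := by
      rw [h0]; push_cast; ring
    rw [h1, Complex.exp_add, exp_odd_pi]; ring
  unfold windMap
  rw [e, h0, h2]
  push_cast; ring

/-- Membership in the union of `K₄` and the faces `x 0 = 0` and `x 1 = 0`: the part of the standard
3-simplex on which `windMap` is well controlled. -/
def OnSkel (x : Fin 4 → ℝ) : Prop :=
  (∀ m, 0 ≤ x m) ∧ x 0 + x 1 + x 2 + x 3 = 1 ∧ ((x 0 = 0 ∨ x 1 = 0) ∨ (x 2 = 0 ∧ x 3 = 0))

lemma seg4_support {i j m : Fin 4} {x : Fin 4 → ℝ} (hx : x ∈ seg4 i j) (hi : m ≠ i) (hj : m ≠ j) :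
    x m = 0 := by
  obtain ⟨a, b, -, -, -, rfl⟩ := hx
  simp [vert4, hi, hj]

lemma seg4_onSkel {i j : Fin 4} {x : Fin 4 → ℝ} (hx : x ∈ seg4 i j) : OnSkel x := by
  refine ⟨?_, ?_, ?_⟩
  · obtain ⟨a, b, ha, hb, -, rfl⟩ := hx
    intro m
    simp only [vert4, Pi.add_apply, Pi.smul_apply, Pi.single_apply, smul_eq_mul]
    split_ifs <;> simp <;> linarith
  · obtain ⟨a, b, -, -, hab, rfl⟩ := hx
    fin_cases i <;> fin_cases j <;> simp [vert4] <;> linarith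
  · -- Otherwise `{i, j}` contains `0`, `1` and one of `2`, `3`.
    have key : ((0 ≠ i ∧ 0 ≠ j) ∨ (1 ≠ i ∧ 1 ≠ j)) ∨ ((2 ≠ i ∧ 2 ≠ j) ∧ (3 ≠ i ∧ 3 ≠ j)) := by
      clear hx; revert i j; decide
    rcases key with (⟨h1, h2⟩ | ⟨h1, h2⟩) | ⟨⟨h1, h2⟩, h3, h4⟩
    · exact Or.inl (Or.inl (seg4_support hx h1 h2))
    · exact Or.inl (Or.inr (seg4_support hx h1 h2))
    · exact Or.inr ⟨seg4_support hx h1 h2, seg4_support hx h3 h4⟩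

/-- A point of the open edge `01` has image of modulus `2`, while a point of the opposite edge has
image of modulus at most `1`. -/
lemma windMap_ne_of_inner (k : ℤ) {x y : Fin 4 → ℝ} (hx : OnSkel x) (hy : OnSkel y)
    (hd : ∀ m, x m = 0 ∨ y m = 0) (h : ¬ (x 0 = 0 ∨ x 1 = 0)) : windMap k x ≠ windMap k y := by
  obtain ⟨-, hx1, hx2⟩ := hx
  obtain ⟨hy0, hy1, -⟩ := hy
  obtain ⟨h2, h3⟩ := hx2.resolve_left h
  have y0 : y 0 = 0 := (hd 0).resolve_left fun e => h (Or.inl e)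
  have y1 : y 1 = 0 := (hd 1).resolve_left fun e => h (Or.inr e)
  intro e
  rw [windMap_of_edge k (by linarith) h2, windMap_of_zero k (Or.inl y0), y0, y1] at e
  have e' := congrArg norm e
  rw [norm_mul, Complex.norm_exp_ofReal_mul_I] at e'
  simp [abs_of_nonneg (hy0 2)] at e'
  linarith [hy0 3]

lemma windMap_ne (k : ℤ) {x y : Fin 4 → ℝ} (hx : OnSkel x) (hy : OnSkel y)
    (hd : ∀ m, x m = 0 ∨ y m = 0) : windMap k x ≠ windMap k y := by
  by_cases h : x 0 = 0 ∨ x 1 = 0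
  swap
  · exact windMap_ne_of_inner k hx hy hd h
  by_cases h' : y 0 = 0 ∨ y 1 = 0
  swap
  · exact (windMap_ne_of_inner k hy hx (fun m => (hd m).symm) h').symm
  obtain ⟨hx0, hx1, -⟩ := hx
  obtain ⟨hy0, hy1, -⟩ := hy
  intro e
  -- The linear formula recovers `x 0`, `x 1`, `x 2`, so all of these vanish and `x 3 = y 3 = 1`.
  rw [windMap_of_zero k h, windMap_of_zero k h'] at e
  have er := congrArg Complex.re e
  have ei := congrArg Complex.im e
  simp at er ei
  have := hx0 0; have := hx0 1; have := hy0 0; have := hy0 1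
  have x2 : x 2 = 0 := by rcases hd 2 with h | h <;> linarith
  have y2 : y 2 = 0 := by linarith
  have a : x 0 = y 0 ∧ x 1 = y 1 := by
    rcases h with h | h <;> rcases h' with h' | h' <;> constructor <;> linarith
  have x0 : x 0 = 0 := by rcases hd 0 with h | h <;> linarith
  have x1 : x 1 = 0 := by rcases hd 1 with h | h <;> linarith
  rcases hd 3 with h | h <;> linarith

lemma vert4_mem_seg4 (i j : Fin 4) : vert4 i ∈ seg4 i j := left_mem_segment ℝ _ _

lemma almostEmbK4_windMap (k : ℤ) : AlmostEmbK4 (windMap k) := by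
  have key : ∀ (i j p q : Fin 4) (x y : Fin 4 → ℝ), x ∈ seg4 i j → y ∈ seg4 p q →
      ({i, j} : Set (Fin 4)) ∩ {p, q} = ∅ → windMap k x ≠ windMap k y := by
    intro i j p q x y hx hy hd
    refine windMap_ne k (seg4_onSkel hx) (seg4_onSkel hy) fun m => ?_
    by_cases hm : m ∈ ({i, j} : Set (Fin 4))
    · have hm' : m ∉ ({p, q} : Set (Fin 4)) := fun h => by
        have : m ∈ ({i, j} : Set (Fin 4)) ∩ {p, q} := ⟨hm, h⟩
        simp [hd] at this
      simp only [mem_insert_iff, mem_singleton_iff, not_or] at hm'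
      exact Or.inr (seg4_support hy hm'.1 hm'.2)
    · simp only [mem_insert_iff, mem_singleton_iff, not_or] at hm
      exact Or.inl (seg4_support hx hm.1 hm.2)
  refine ⟨(continuous_windMap k).continuousOn, ?_, ?_, ?_⟩
  · intro i j p q _ _ hd
    rw [Set.disjoint_left]
    rintro _ ⟨x, hx, rfl⟩ ⟨y, hy, e⟩
    exact key i j p q x y hx hy hd e.symm
  -- A vertex `i` lies on the degenerate segment `seg4 i i`.
  · rintro i j l _ hi ⟨y, hy, e⟩
    refine key i i j l _ y (vert4_mem_seg4 i i) hy ?_ e.symm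
    rw [pair_eq_singleton, singleton_inter_eq_empty]
    exact hi
  · intro i j hij
    refine key i i j j _ _ (vert4_mem_seg4 i i) (vert4_mem_seg4 j j) ?_
    simpa using hij.symm

lemma continuous_triLoop4 : Continuous triLoop4 := by
  unfold triLoop4
  refine Continuous.if_le (by fun_prop) (Continuous.if_le (by fun_prop) (by fun_prop)
    continuous_id continuous_const ?_) continuous_id continuous_const ?_
  · rintro t rfl; norm_num
  · rintro t rfl; norm_num

lemma windMap_triLoop4_first (k : ℤ) {t : ℝ} (h : t ≤ 1 / 3) : windMap k (triLoop4 t)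
    = 2 * Complex.exp ((Real.pi * (2 * k + 1) * (3 * t) : ℝ) * Complex.I) := by
  have e : triLoop4 t = (1 - 3 * t) • vert4 0 + (3 * t) • vert4 1 := by
    simp only [triLoop4, if_pos h]
  have e1 : triLoop4 t 1 = 3 * t := by simp [e, vert4]
  rw [windMap_of_edge k (by simp [e, vert4]) (by simp [e, vert4]), e1]

/-- On the edges `12` and `20` the loop stays off the negative imaginary axis, so that
`log (-i z)` is continuous along it. -/
lemma slitPlane_windMap_triLoop4 (k : ℤ) {t : ℝ} (h : 1 / 3 ≤ t) (h1 : t ≤ 1) :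
    -Complex.I * windMap k (triLoop4 t) ∈ Complex.slitPlane := by
  rcases h.eq_or_lt with rfl | h
  · rw [windMap_triLoop4_first k le_rfl, show Real.pi * (2 * k + 1) * (3 * (1 / 3))
      = Real.pi * (2 * k + 1) by ring, exp_odd_pi]
    right; simp
  by_cases h2 : t ≤ 2 / 3
  · have e : triLoop4 t = (2 - 3 * t) • vert4 1 + (3 * t - 1) • vert4 2 := by
      simp only [triLoop4, if_neg (not_le.2 h), if_pos h2]
    rw [windMap_of_zero k (Or.inl (by simp [e, vert4]))]
    left
    simp [e, vert4]
    linarith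
  · have e : triLoop4 t = (3 - 3 * t) • vert4 2 + (3 * t - 2) • vert4 0 := by
      simp only [triLoop4, if_neg (not_le.2 h), if_neg h2]
    rw [windMap_of_zero k (Or.inr (by simp [e, vert4]))]
    right
    simp [e, vert4]
    intro h
    linarith

lemma log_two_I : Complex.log (2 * Complex.I) = Real.log 2 + Real.pi / 2 * Complex.I := by
  have := Complex.log_ofReal_mul (r := 2) (by norm_num) Complex.I_ne_zero
  rw [Complex.log_I] at this
  exact_mod_cast this

lemma log_neg_two_I : Complex.log (-(2 * Complex.I)) = Real.log 2 - Real.pi / 2 * Complex.I := by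
  have := Complex.log_ofReal_mul (r := 2) (by norm_num) (neg_ne_zero.2 Complex.I_ne_zero)
  rw [Complex.log_neg_I] at this
  rw [← mul_neg]
  push_cast at this ⊢
  rw [this]; ring

lemma isWindingNumber_windMap (k : ℤ) :
    IsWindingNumber (fun t => windMap k (triLoop4 t)) (windMap k (vert4 3)) k := by
  have hA : windMap k (vert4 3) = 0 := by simp [windMap, vert4]
  have third : windMap k (triLoop4 (1 / 3)) = -2 := by
    rw [windMap_triLoop4_first k le_rfl, show Real.pi * (2 * k + 1) * (3 * (1 / 3))
      = Real.pi * (2 * k + 1) by ring, exp_odd_pi]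
    norm_num
  have one : windMap k (triLoop4 1) = 2 := by
    norm_num [windMap, triLoop4, vert4, Pi.single_apply]
    decide
  -- The constant in the second branch makes the two branches agree at `t = 1/3`.
  refine ⟨fun t => if t ≤ 1 / 3 then
      (Real.log 2 : ℂ) + (Real.pi * (2 * k + 1) * (3 * t) : ℝ) * Complex.I
    else Complex.log (-Complex.I * windMap k (triLoop4 t))
      + (2 * Real.pi * k * Complex.I + Real.pi / 2 * Complex.I), ?_, ?_, ?_⟩
  · refine ContinuousOn.if ?_ (by fun_prop) ?_
    · rintro t ⟨-, ht⟩
      have : t = 1 / 3 := by simpa using frontier_le_subset_eq continuous_id continuous_const ht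
      subst this
      rw [third, show -Complex.I * -2 = 2 * Complex.I by ring, log_two_I]
      push_cast; ring
    · refine ContinuousOn.add (ContinuousOn.clog ?_ ?_) continuousOn_const
      · exact (continuous_const.mul
          ((continuous_windMap k).comp continuous_triLoop4)).continuousOn
      · rintro t ⟨⟨-, ht1⟩, ht⟩
        have : 1 / 3 ≤ t := by
          have hc : closure {a : ℝ | ¬ a ≤ 1 / 3} ⊆ Ici (1 / 3) :=
            closure_minimal (fun a ha => (not_le.1 ha).le) isClosed_Ici
          exact hc ht
        exact slitPlane_windMap_triLoop4 k this ht1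
  · rintro t ⟨-, ht1⟩
    simp only [hA, zero_add]
    split_ifs with h
    · rw [windMap_triLoop4_first k h, Complex.exp_add, ← Complex.ofReal_exp,
        Real.exp_log two_pos]
      push_cast; rfl
    · rw [Complex.exp_add, Complex.exp_log
        (Complex.slitPlane_ne_zero (slitPlane_windMap_triLoop4 k (not_le.1 h).le ht1)),
        Complex.exp_add, Complex.exp_pi_div_two_mul_I,
        show 2 * (Real.pi : ℂ) * k * Complex.I = k * (2 * Real.pi * Complex.I) by ring,
        Complex.exp_int_mul_two_pi_mul_I]
      linear_combination (windMap k (triLoop4 t)) * Complex.I_mul_I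
  · beta_reduce
    rw [if_neg (by norm_num), if_pos (by norm_num), one,
      show -Complex.I * 2 = -(2 * Complex.I) by ring, log_neg_two_I]
    push_cast; ring

/-- For any integer `k` there exists a continuous almost embedding `g : K₄ → ℝ²`
such that `w(g|K₃, g4) = k`. -/
theorem exists_almostEmb_K4_winding_eq (k : ℤ) :
    ∃ g : (Fin 4 → ℝ) → ℂ, AlmostEmbK4 g ∧
      IsWindingNumber (fun t => g (triLoop4 t)) (g (vert4 3)) k := ⟨windMap k, almostEmbK4_windMap k, isWindingNumber_windMap k⟩
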